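/- Let L : ℝ^m × ℝ^N × (ℝ^N)^m → ℝ be a smooth first-order Lagrangian, η : ℝ^m → ℝ^m a smooth diffeomorphism, and φ : ℝ^m → ℝ^N smooth. Define the covariantized Lagrangian L̃(x,b,J,y,v) := L(b, y, v·J⁻¹)·det J for b ∈ ℝ^m, J an invertible m×m matrix, y ∈ ℝ^N, v ∈ (ℝ^N)^m, where (v·J⁻¹)^A_c = Σ_μ v^A_μ (J⁻¹)^μ_c, evaluated along the section s(x) = (x, η(x), Dη(x), φ(x), Dφ(x)). If (η,φ) satisfies the Euler–Lagrange equations of L̃ with respect to φ, i.e. (∂L̃/∂y^A)(s(x)) − Σ_μ (d/dx^μ)[(∂L̃/∂v^A_μ)(s(x))] = 0 for all A and x, then the Euler–Lagrange equations of L̃ with respect to the covariance field η are identically satisfied: (∂L̃/∂b^a)(s(x)) − Σ_μ (d/dx^μ)[(∂L̃/∂J^a_μ)(s(x))] = 0 for all a and all x ∈ ℝ^m. -/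

import Mathlib

noncomputable section

/-- Jacobian matrix of `η : ℝ^m → ℝ^m`: `(jacobian η x) a μ = ∂η^a/∂x^μ (x)`. -/
def jacobian {m : ℕ} (η : (Fin m → ℝ) → (Fin m → ℝ)) (x : Fin m → ℝ) :
    Fin m → Fin m → ℝ :=
  fun a μ => fderiv ℝ η x (Pi.single μ 1) a

/-- First-jet multivelocities of a field `φ : ℝ^m → ℝ^N`: `(jet1 φ x) A μ = ∂φ^A/∂x^μ (x)`. -/
def jet1 {m N : ℕ} (φ : (Fin m → ℝ) → (Fin N → ℝ)) (x : Fin m → ℝ) :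
    Fin N → Fin m → ℝ :=
  fun A μ => fderiv ℝ φ x (Pi.single μ 1) A

/-- The covariantized Lagrangian `L̃(x,b,J,y,v) = L(b, y, v·J⁻¹) · det J`. -/
def Ltilde {m N : ℕ}
    (L : (Fin m → ℝ) × (Fin N → ℝ) × (Fin N → Fin m → ℝ) → ℝ) :
    (Fin m → ℝ) × (Fin m → ℝ) × (Fin m → Fin m → ℝ) × (Fin N → ℝ) ×
      (Fin N → Fin m → ℝ) → ℝ :=
  fun p =>
    L (p.2.1, p.2.2.2.1, fun A c => ∑ μ : Fin m, p.2.2.2.2 A μ * (Matrix.of p.2.2.1)⁻¹ μ c)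
      * (Matrix.of p.2.2.1).det

/-- The section `s(x) = (x, η(x), Dη(x), φ(x), Dφ(x))`. -/
def covSect {m N : ℕ} (η : (Fin m → ℝ) → (Fin m → ℝ))
    (φ : (Fin m → ℝ) → (Fin N → ℝ)) (x : Fin m → ℝ) :
    (Fin m → ℝ) × (Fin m → ℝ) × (Fin m → Fin m → ℝ) × (Fin N → ℝ) ×
      (Fin N → Fin m → ℝ) :=
  (x, η x, jacobian η x, φ x, jet1 φ x)

/-!
For a first-order Lagrangian without explicit dependence on the base point, the divergence of the
canonical stress tensor `∂Λ/∂(∂_ν u) · ∂_μ u - δ_μν Λ` along the jet of `u` is minus the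
Euler–Lagrange covector applied to `∂_μ u`. For `L̃`, as a Lagrangian in the pair `(η, φ)`, this
tensor vanishes identically: `L̃` is multiplied by `det K` under `J ↦ J K`, `v ↦ v K`, and the
derivative of this law at `K = 1` in the direction of an elementary matrix is the vanishing of one
component. Hence `EL_η ∘ Dη + EL_φ ∘ Dφ = 0` off shell, so that `EL_φ = 0` forces `EL_η = 0`, as
`Dη` is invertible.
-/

open Filter Topology

section CanonicalStress

variable {ι V : Type*} [Fintype ι] [DecidableEq ι] [NormedAddCommGroup V] [NormedSpace ℝ V]

/-- The first jet `(x, u(x), ∂u(x))` of a field `u : ℝ^ι → V`, with the velocities listed as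
`ν ↦ ∂_ν u(x)`. -/
def firstJet (u : (ι → ℝ) → V) (x : ι → ℝ) : (ι → ℝ) × V × (ι → V) :=
  (x, u x, fun ν => fderiv ℝ u x (Pi.single ν 1))

/-- The Euler–Lagrange covector `w ↦ ∂Λ/∂u · w - ∑_ν d/dx^ν (∂Λ/∂(∂_ν u)) · w` of the first-order
Lagrangian `Λ` along `u`. The total derivatives act on the whole differential of `Λ` along the jet,
which is afterwards evaluated in the velocity slot `ν`. -/
def eulerLagrange (Λ : (ι → ℝ) × V × (ι → V) → ℝ) (u : (ι → ℝ) → V) (x : ι → ℝ) : V →L[ℝ] ℝ :=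
  fderiv ℝ Λ (firstJet u x) ∘L .inr ℝ _ _ ∘L .inl ℝ _ _
    - ∑ ν, fderiv ℝ (fun z => fderiv ℝ Λ (firstJet u z)) x (Pi.single ν 1) ∘L
        .inr ℝ _ _ ∘L .inr ℝ _ _ ∘L .single ℝ _ ν

/-- The canonical stress tensor `∂Λ/∂(∂_ν u) · ∂_μ u - δ_μν Λ` (canonical energy-momentum tensor)
of a first-order Lagrangian, as a function on the jet space. -/
def canonicalStress (Λ : (ι → ℝ) × V × (ι → V) → ℝ) (μ ν : ι) (p : (ι → ℝ) × V × (ι → V)) : ℝ :=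
  fderiv ℝ Λ p (0, 0, Pi.single ν (p.2.2 μ)) - if μ = ν then Λ p else 0

variable {Λ : (ι → ℝ) × V × (ι → V) → ℝ} {u : (ι → ℝ) → V} {x : ι → ℝ}

theorem eulerLagrange_apply (w : V) :
    eulerLagrange Λ u x w = fderiv ℝ Λ (firstJet u x) (0, w, 0)
      - ∑ ν, fderiv ℝ (fun z => fderiv ℝ Λ (firstJet u z)) x (Pi.single ν 1)
          (0, 0, Pi.single ν w) := by
  simp [eulerLagrange]

theorem hasFDerivAt_firstJet (hu : ContDiffAt ℝ 2 u x) :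
    HasFDerivAt (firstJet u)
      ((ContinuousLinearMap.id ℝ (ι → ℝ)).prod ((fderiv ℝ u x).prod
        (.pi fun ν => (fderiv ℝ (fderiv ℝ u) x).flip (Pi.single ν 1)))) x := by
  have hu' : DifferentiableAt ℝ (fderiv ℝ u) x :=
    (hu.fderiv_right (m := 1) (by norm_num)).differentiableAt (by simp)
  refine (hasFDerivAt_id x).prodMk ((hu.differentiableAt (by simp)).hasFDerivAt.prodMk
    (hasFDerivAt_pi.2 fun ν => ?_))
  simpa using hu'.hasFDerivAt.clm_apply (hasFDerivAt_const (Pi.single ν (1 : ℝ)) x)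

theorem differentiableAt_fderiv_firstJet (hΛ : ContDiffAt ℝ 2 Λ (firstJet u x))
    (hu : ContDiffAt ℝ 2 u x) : DifferentiableAt ℝ (fun z => fderiv ℝ Λ (firstJet u z)) x :=
  ((hΛ.fderiv_right (m := 1) (by norm_num)).differentiableAt (by simp)).comp x
    (hasFDerivAt_firstJet hu).differentiableAt

theorem fderiv_canonicalStress_firstJet (hΛ : ContDiffAt ℝ 2 Λ (firstJet u x))
    (hu : ContDiffAt ℝ 2 u x) (μ ν : ι) (e : ι → ℝ) :
    fderiv ℝ (fun z => canonicalStress Λ μ ν (firstJet u z)) x e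
      = fderiv ℝ (fun z => fderiv ℝ Λ (firstJet u z)) x e
          (0, 0, Pi.single ν (fderiv ℝ u x (Pi.single μ 1)))
        + fderiv ℝ Λ (firstJet u x)
          (0, 0, Pi.single ν (fderiv ℝ (fderiv ℝ u) x e (Pi.single μ 1)))
        - if μ = ν then fderiv ℝ Λ (firstJet u x)
            (e, fderiv ℝ u x e, fun κ => fderiv ℝ (fderiv ℝ u) x e (Pi.single κ 1)) else 0 := by
  have hjet := hasFDerivAt_firstJet hu
  have hvelocity : HasFDerivAt
      (fun z => ((0, 0, Pi.single ν ((firstJet u z).2.2 μ)) : (ι → ℝ) × V × (ι → V)))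
      (.inr ℝ _ _ ∘L .inr ℝ _ _ ∘L .single ℝ _ ν ∘L
        (fderiv ℝ (fderiv ℝ u) x).flip (Pi.single μ 1)) x :=
    (ContinuousLinearMap.inr ℝ (ι → ℝ) (V × (ι → V)) ∘L .inr ℝ _ _ ∘L
      .single ℝ (fun _ => V) ν).hasFDerivAt.comp x (hasFDerivAt_pi'.1 hjet.snd.snd μ)
  have hmomentum := (differentiableAt_fderiv_firstJet hΛ hu).hasFDerivAt.clm_apply hvelocity
  have hLagrangian : HasFDerivAt (fun z => Λ (firstJet u z)) _ x :=
    (hΛ.differentiableAt (by simp)).hasFDerivAt.comp x hjet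
  by_cases hμν : μ = ν
  · simp only [canonicalStress, if_pos hμν]
    rw [(hmomentum.fun_sub hLagrangian).fderiv]
    simp [firstJet, add_comm]
  · simp only [canonicalStress, if_neg hμν, sub_zero]
    rw [hmomentum.fderiv]
    simp [firstJet, add_comm]

/-- Schwarz's theorem is what cancels the second derivatives of `u`. -/
theorem sum_fderiv_canonicalStress_firstJet (hΛ : ContDiffAt ℝ 2 Λ (firstJet u x))
    (hu : ContDiffAt ℝ 2 u x) (μ : ι) :
    ∑ ν, fderiv ℝ (fun z => canonicalStress Λ μ ν (firstJet u z)) x (Pi.single ν 1)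
      = -eulerLagrange Λ u x (fderiv ℝ u x (Pi.single μ 1))
        - fderiv ℝ Λ (firstJet u x) (Pi.single μ 1, 0, 0) := by
  have hsymm : ∀ ν, fderiv ℝ (fderiv ℝ u) x (Pi.single ν 1) (Pi.single μ 1)
      = fderiv ℝ (fderiv ℝ u) x (Pi.single μ 1) (Pi.single ν 1) :=
    fun ν => (hu.isSymmSndFDerivAt (by simp)).eq _ _
  have hassemble : ∀ v : ι → V,
      ∑ ν, fderiv ℝ Λ (firstJet u x) (0, 0, Pi.single ν (v ν))
        = fderiv ℝ Λ (firstJet u x) (0, 0, v) := fun v => by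
    change ∑ ν, (fderiv ℝ Λ (firstJet u x) ∘L .inr ℝ _ _ ∘L .inr ℝ _ _) (Pi.single ν (v ν)) = _
    rw [← map_sum, Finset.univ_sum_single]
    rfl
  have hsplit : ∀ (w : V) (v : ι → V), fderiv ℝ Λ (firstJet u x) (Pi.single μ 1, w, v)
      = fderiv ℝ Λ (firstJet u x) (Pi.single μ 1, 0, 0) + fderiv ℝ Λ (firstJet u x) (0, w, 0)
        + fderiv ℝ Λ (firstJet u x) (0, 0, v) := fun w v => by
    simp only [← map_add, Prod.mk_add_mk, add_zero, zero_add]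
  simp only [fderiv_canonicalStress_firstJet hΛ hu, hsymm, Finset.sum_sub_distrib,
    Finset.sum_add_distrib, Finset.sum_ite_eq, Finset.mem_univ, if_true, hassemble,
    eulerLagrange_apply]
  rw [hsplit]
  ring

theorem eulerLagrange_comp_fderiv_eq_zero (hΛ : ContDiffAt ℝ 2 Λ (firstJet u x))
    (hu : ContDiffAt ℝ 2 u x) (hbase : ∀ e, fderiv ℝ Λ (firstJet u x) (e, 0, 0) = 0)
    (hstress : ∀ μ ν, ∀ᶠ p in 𝓝 (firstJet u x), canonicalStress Λ μ ν p = 0) :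
    eulerLagrange Λ u x ∘L fderiv ℝ u x = 0 := by
  have hconst : ∀ μ ν, fderiv ℝ (fun z => canonicalStress Λ μ ν (firstJet u z)) x = 0 := by
    intro μ ν
    have hzero : (fun z => canonicalStress Λ μ ν (firstJet u z)) =ᶠ[𝓝 x] fun _ => 0 :=
      (hasFDerivAt_firstJet hu).continuousAt.eventually (hstress μ ν)
    rw [hzero.fderiv_eq, fderiv_const_apply]
  have hbasis : ∀ μ, eulerLagrange Λ u x (fderiv ℝ u x (Pi.single μ 1)) = 0 := fun μ => by
    simpa [hconst, hbase] using (sum_fderiv_canonicalStress_firstJet hΛ hu μ).symm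
  exact ContinuousLinearMap.coe_injective (LinearMap.pi_ext' fun μ => LinearMap.ext_ring (hbasis μ))

end CanonicalStress

section MatrixCalculus

variable {𝕜 E n : Type*} [NontriviallyNormedField 𝕜] [NormedAddCommGroup E] [NormedSpace 𝕜 E]
  [Fintype n] [DecidableEq n]

theorem hasDerivAt_det_one_add_smul (A : Matrix n n 𝕜) :
    HasDerivAt (fun t : 𝕜 => (1 + t • A).det) A.trace 0 := by
  have hpoly : ∀ t : 𝕜, (1 + t • A).det
      = (1 + (Polynomial.X : Polynomial 𝕜) • A.map Polynomial.C).det.eval t := fun t => by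
    simp [eval_det, ← Matrix.smul_eq_mul_diagonal]
  simp only [hpoly, ← Matrix.derivative_det_one_add_X_smul]
  exact Polynomial.hasDerivAt _ 0

variable {k : WithTop ℕ∞} {M : E → Matrix n n 𝕜} {p : E}

theorem contDiffAt_matrix_det (hM : ∀ i j, ContDiffAt 𝕜 k (fun q => M q i j) p) :
    ContDiffAt 𝕜 k (fun q => (M q).det) p := by
  simp only [Matrix.det_apply']
  exact ContDiffAt.sum fun σ _ => contDiffAt_const.mul (contDiffAt_prod fun i _ => hM _ _)

theorem contDiffAt_matrix_inv (hM : ∀ i j, ContDiffAt 𝕜 k (fun q => M q i j) p)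
    (hdet : (M p).det ≠ 0) (i j : n) : ContDiffAt 𝕜 k (fun q => (M q)⁻¹ i j) p := by
  simp only [Matrix.inv_def, Matrix.smul_apply, smul_eq_mul, Ring.inverse_eq_inv',
    Matrix.adjugate_apply]
  refine ((contDiffAt_matrix_det hM).inv hdet).mul (contDiffAt_matrix_det fun a b => ?_)
  by_cases h : a = j
  · subst h
    simpa using contDiffAt_const
  · simpa [Matrix.updateRow_ne h] using hM a b

end MatrixCalculus

section Jacobian

variable {m : ℕ} {η : (Fin m → ℝ) → (Fin m → ℝ)} {x : Fin m → ℝ}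

theorem of_jacobian : Matrix.of (jacobian η x) = (fderiv ℝ η x).toLinearMap.toMatrix' := by
  ext a μ
  simp [jacobian, LinearMap.toMatrix'_apply]

theorem det_jacobian : (Matrix.of (jacobian η x)).det = (fderiv ℝ η x).det := by
  rw [of_jacobian, LinearMap.det_toMatrix', ContinuousLinearMap.det]

theorem surjective_fderiv_of_det_jacobian_ne_zero (h : (Matrix.of (jacobian η x)).det ≠ 0) :
    Function.Surjective (fderiv ℝ η x) := by
  have hunit : IsUnit (fderiv ℝ η x).toLinearMap :=
    (LinearMap.isUnit_iff_isUnit_det _).2 (isUnit_iff_ne_zero.2 (det_jacobian.symm.trans_ne h))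
  exact ((Module.End.isUnit_iff _).1 hunit).surjective

theorem det_jacobian_ne_zero_of_leftInverse {η' : (Fin m → ℝ) → (Fin m → ℝ)}
    (hη : DifferentiableAt ℝ η x) (hη' : DifferentiableAt ℝ η' (η x))
    (h : Function.LeftInverse η' η) : (Matrix.of (jacobian η x)).det ≠ 0 := by
  have hcomp : fderiv ℝ η' (η x) ∘L fderiv ℝ η x = .id ℝ _ := by
    rw [← fderiv_comp x hη' hη, h.comp_eq_id, fderiv_id]
  have hmul : (fderiv ℝ η' (η x)).det * (fderiv ℝ η x).det = 1 := by
    simpa [ContinuousLinearMap.det, LinearMap.det_comp] using congrArg ContinuousLinearMap.det hcomp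
  exact det_jacobian ▸ right_ne_zero_of_mul_eq_one hmul

end Jacobian

section CovariantizedLagrangian

variable {m N : ℕ}

/-- The space of the variables `(x, b, J, y, v)` of a covariantized Lagrangian. -/
abbrev CovJet (m N : ℕ) : Type :=
  (Fin m → ℝ) × (Fin m → ℝ) × (Fin m → Fin m → ℝ) × (Fin N → ℝ) × (Fin N → Fin m → ℝ)

/-- The velocities `(v · K)^A_ν = ∑_μ v^A_μ K^μ_ν` after the linear reparametrization `K` of the
base. -/
def velocityMul {k : ℕ} (v : Fin k → Fin m → ℝ) (K : Matrix (Fin m) (Fin m) ℝ) :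
    Fin k → Fin m → ℝ :=
  fun A ν => ∑ μ, v A μ * K μ ν

theorem of_velocityMul {k : ℕ} (v : Fin k → Fin m → ℝ) (K : Matrix (Fin m) (Fin m) ℝ) :
    Matrix.of (velocityMul v K) = Matrix.of v * K := by
  ext A ν
  simp [velocityMul, Matrix.mul_apply]

theorem velocityMul_one_add_smul {k : ℕ} (v : Fin k → Fin m → ℝ) (t : ℝ)
    (K : Matrix (Fin m) (Fin m) ℝ) : velocityMul v (1 + t • K) = v + t • velocityMul v K := by
  apply Matrix.of.injective
  rw [of_velocityMul, Matrix.mul_add, Matrix.mul_one, Matrix.mul_smul, ← of_velocityMul]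
  rfl

theorem velocityMul_single {k : ℕ} (v : Fin k → Fin m → ℝ) (μ ν : Fin m) :
    velocityMul v (Matrix.single μ ν 1) = fun A => Pi.single ν (v A μ) := by
  ext A κ
  simp [velocityMul, Matrix.single_apply, Pi.single_apply, ite_and, eq_comm]

variable {L : (Fin m → ℝ) × (Fin N → ℝ) × (Fin N → Fin m → ℝ) → ℝ}

theorem Ltilde_apply (x b : Fin m → ℝ) (J : Fin m → Fin m → ℝ) (y : Fin N → ℝ)
    (v : Fin N → Fin m → ℝ) :
    Ltilde L (x, b, J, y, v) = L (b, y, velocityMul v (Matrix.of J)⁻¹) * (Matrix.of J).det :=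
  rfl

theorem contDiffAt_Ltilde {k : WithTop ℕ∞} (hL : ContDiff ℝ k L) {p : CovJet m N}
    (hp : (Matrix.of p.2.2.1).det ≠ 0) : ContDiffAt ℝ k (Ltilde L) p := by
  have hJ : ∀ i j, ContDiffAt ℝ k (fun q : CovJet m N => Matrix.of q.2.2.1 i j) p := fun i j => by
    simp only [Matrix.of_apply]
    fun_prop
  have hv : ContDiffAt ℝ k
      (fun q : CovJet m N => velocityMul q.2.2.2.2 (Matrix.of q.2.2.1)⁻¹) p :=
    contDiffAt_pi.2 fun A => contDiffAt_pi.2 fun c => ContDiffAt.sum fun μ _ =>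
      ContDiffAt.mul (by fun_prop) (contDiffAt_matrix_inv hJ hp μ c)
  have hslots : ContDiffAt ℝ k (fun q : CovJet m N =>
      (q.2.1, q.2.2.2.1, velocityMul q.2.2.2.2 (Matrix.of q.2.2.1)⁻¹)) p :=
    ContDiffAt.prodMk (by fun_prop) (ContDiffAt.prodMk (by fun_prop) hv)
  exact (hL.contDiffAt.comp p hslots).mul (contDiffAt_matrix_det hJ)

theorem Ltilde_velocityMul (x b : Fin m → ℝ) (J : Fin m → Fin m → ℝ) (y : Fin N → ℝ)
    (v : Fin N → Fin m → ℝ) {K : Matrix (Fin m) (Fin m) ℝ} (hK : K.det ≠ 0) :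
    Ltilde L (x, b, velocityMul J K, y, velocityMul v K)
      = K.det * Ltilde L (x, b, J, y, v) := by
  have hcancel : velocityMul (velocityMul v K) (Matrix.of J * K)⁻¹
      = velocityMul v (Matrix.of J)⁻¹ := by
    apply Matrix.of.injective
    rw [of_velocityMul, of_velocityMul, of_velocityMul, Matrix.mul_inv_rev, Matrix.mul_assoc,
      Matrix.mul_nonsing_inv_cancel_left _ _ (isUnit_iff_ne_zero.2 hK)]
  rw [Ltilde_apply, Ltilde_apply, of_velocityMul, hcancel, Matrix.det_mul]
  ring

theorem fderiv_Ltilde_velocityMul (x b : Fin m → ℝ) (J : Fin m → Fin m → ℝ) (y : Fin N → ℝ)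
    (v : Fin N → Fin m → ℝ) (hd : DifferentiableAt ℝ (Ltilde L) (x, b, J, y, v))
    (K : Matrix (Fin m) (Fin m) ℝ) :
    fderiv ℝ (Ltilde L) (x, b, J, y, v) (0, 0, velocityMul J K, 0, velocityMul v K)
      = K.trace * Ltilde L (x, b, J, y, v) := by
  have hdet := hasDerivAt_det_one_add_smul K
  have hdet_ne : ∀ᶠ t : ℝ in 𝓝 0, (1 + t • K).det ≠ 0 :=
    hdet.continuousAt.eventually_ne (by simp)
  have hscale : (fun t : ℝ => Ltilde L
        ((x, b, J, y, v) + t • (0, 0, velocityMul J K, 0, velocityMul v K)))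
      =ᶠ[𝓝 0] fun t => (1 + t • K).det * Ltilde L (x, b, J, y, v) := by
    filter_upwards [hdet_ne] with t ht
    simp [← Ltilde_velocityMul x b J y v ht, velocityMul_one_add_smul]
  have hline := hd.hasFDerivAt.hasLineDerivAt (0, 0, velocityMul J K, 0, velocityMul v K)
  exact HasDerivAt.unique hline ((hdet.mul_const _).congr_of_eventuallyEq hscale)

theorem fderiv_Ltilde_base {p : CovJet m N} (hd : DifferentiableAt ℝ (Ltilde L) p)
    (e : Fin m → ℝ) : fderiv ℝ (Ltilde L) p (e, 0, 0, 0, 0) = 0 := by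
  rw [← hd.lineDeriv_eq_fderiv]
  simp [lineDeriv, Ltilde]

/-- Reorders the jet variables of the pair of fields `(η, φ)` into the variables of `Ltilde`:
`(x, (b, y), ν ↦ (J_ν, v_ν))` becomes `(x, b, J, y, v)`. -/
def jetEquiv (m N : ℕ) :
    ((Fin m → ℝ) × ((Fin m → ℝ) × (Fin N → ℝ)) × (Fin m → (Fin m → ℝ) × (Fin N → ℝ)))
      ≃L[ℝ] CovJet m N where
  toFun p := (p.1, p.2.1.1, fun a ν => (p.2.2 ν).1 a, p.2.1.2, fun A ν => (p.2.2 ν).2 A)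
  invFun q := (q.1, (q.2.1, q.2.2.2.1), fun ν => (fun a => q.2.2.1 a ν, fun A => q.2.2.2.2 A ν))
  map_add' _ _ := rfl
  map_smul' _ _ := rfl
  left_inv _ := rfl
  right_inv _ := rfl
  continuous_toFun := by fun_prop
  continuous_invFun := by fun_prop

theorem jetEquiv_single (ν : Fin m) (w : (Fin m → ℝ) × (Fin N → ℝ)) :
    jetEquiv m N (0, 0, Pi.single ν w)
      = (0, 0, fun a => Pi.single ν (w.1 a), 0, fun A => Pi.single ν (w.2 A)) := by
  refine Prod.ext rfl (Prod.ext rfl (Prod.ext ?_ (Prod.ext rfl ?_)))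
  all_goals
    ext i κ
    by_cases hκ : κ = ν <;> simp [jetEquiv, hκ]

theorem jetEquiv_firstJet {η : (Fin m → ℝ) → (Fin m → ℝ)} {φ : (Fin m → ℝ) → (Fin N → ℝ)}
    {x : Fin m → ℝ} (hη : DifferentiableAt ℝ η x) (hφ : DifferentiableAt ℝ φ x) :
    jetEquiv m N (firstJet (fun z => (η z, φ z)) x) = covSect η φ x := by
  simp only [firstJet, hη.fderiv_prodMk hφ]
  rfl

theorem canonicalStress_Ltilde_comp_jetEquiv
    {p : (Fin m → ℝ) × ((Fin m → ℝ) × (Fin N → ℝ)) × (Fin m → (Fin m → ℝ) × (Fin N → ℝ))}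
    (hd : DifferentiableAt ℝ (Ltilde L) (jetEquiv m N p)) (μ ν : Fin m) :
    canonicalStress (Ltilde L ∘ jetEquiv m N) μ ν p = 0 := by
  have hscale := fderiv_Ltilde_velocityMul _ _ _ _ _ hd (Matrix.single μ ν 1)
  simp only [velocityMul_single] at hscale
  have hmomentum : fderiv ℝ (Ltilde L ∘ jetEquiv m N) p (0, 0, Pi.single ν (p.2.2 μ))
      = (Matrix.single μ ν (1 : ℝ)).trace * Ltilde L (jetEquiv m N p) := by
    rw [ContinuousLinearEquiv.comp_right_fderiv]
    exact (congrArg _ (jetEquiv_single ν (p.2.2 μ))).trans hscale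
  rw [canonicalStress, hmomentum]
  by_cases hμν : μ = ν
  · simp [hμν]
  · simp [hμν, Matrix.trace_single_eq_of_ne]

variable {η : (Fin m → ℝ) → (Fin m → ℝ)} {φ : (Fin m → ℝ) → (Fin N → ℝ)} {x : Fin m → ℝ}

theorem eventually_jetEquiv_firstJet (hη : ContDiffAt ℝ 1 η x) (hφ : ContDiffAt ℝ 1 φ x) :
    ∀ᶠ z in 𝓝 x, jetEquiv m N (firstJet (fun z => (η z, φ z)) z) = covSect η φ z := by
  filter_upwards [hη.eventually (by simp), hφ.eventually (by simp)] with z hηz hφz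
  exact jetEquiv_firstJet (hηz.differentiableAt (by simp)) (hφz.differentiableAt (by simp))

theorem eulerLagrange_comp_jetEquiv {F : CovJet m N → ℝ} (hF : ContDiffAt ℝ 2 F (covSect η φ x))
    (hη : ContDiffAt ℝ 2 η x) (hφ : ContDiffAt ℝ 2 φ x) (w : (Fin m → ℝ) × (Fin N → ℝ)) :
    eulerLagrange (F ∘ jetEquiv m N) (fun z => (η z, φ z)) x w
      = fderiv ℝ F (covSect η φ x) (0, w.1, 0, w.2, 0)
        - ∑ ν, fderiv ℝ (fun z => fderiv ℝ F (covSect η φ z)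
            (0, 0, fun a => Pi.single ν (w.1 a), 0, fun A => Pi.single ν (w.2 A)))
              x (Pi.single ν 1) := by
  have hsect := eventually_jetEquiv_firstJet (hη.of_le one_le_two) (hφ.of_le one_le_two)
  have hΛ : ContDiffAt ℝ 2 (F ∘ jetEquiv m N) (firstJet (fun z => (η z, φ z)) x) :=
    ContDiffAt.comp _ (hsect.self_of_nhds ▸ hF) (jetEquiv m N).contDiff.contDiffAt
  have hmomenta := differentiableAt_fderiv_firstJet hΛ (hη.prodMk hφ)
  rw [eulerLagrange_apply]
  congr 1
  · rw [ContinuousLinearEquiv.comp_right_fderiv, hsect.self_of_nhds]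
    rfl
  · refine Finset.sum_congr rfl fun ν _ => ?_
    have hmomentum : (fun z => fderiv ℝ (F ∘ jetEquiv m N) (firstJet (fun z => (η z, φ z)) z)
          (0, 0, Pi.single ν w)) =ᶠ[𝓝 x] fun z => fderiv ℝ F (covSect η φ z)
          (0, 0, fun a => Pi.single ν (w.1 a), 0, fun A => Pi.single ν (w.2 A)) := by
      filter_upwards [hsect] with z hz
      rw [ContinuousLinearEquiv.comp_right_fderiv, hz, ← jetEquiv_single]
      rfl
    rw [← hmomentum.fderiv_eq, fderiv_clm_apply hmomenta (differentiableAt_const _)]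
    simp

theorem eulerLagrange_comp_jetEquiv_inl_single {F : CovJet m N → ℝ}
    (hF : ContDiffAt ℝ 2 F (covSect η φ x)) (hη : ContDiffAt ℝ 2 η x) (hφ : ContDiffAt ℝ 2 φ x)
    (a : Fin m) :
    eulerLagrange (F ∘ jetEquiv m N) (fun z => (η z, φ z)) x (Pi.single a 1, 0)
      = fderiv ℝ F (covSect η φ x) (0, Pi.single a 1, 0, 0, 0)
        - ∑ μ, fderiv ℝ (fun z => fderiv ℝ F (covSect η φ z)
            (0, 0, Pi.single a (Pi.single μ 1), 0, 0)) x (Pi.single μ 1) := by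
  have hsingle : ∀ ν : Fin m, (fun i => Pi.single ν ((Pi.single a 1 : Fin m → ℝ) i))
      = (Pi.single a (Pi.single ν 1) : Fin m → Fin m → ℝ) := fun ν =>
    funext (Pi.apply_single (fun _ => Pi.single ν) (fun _ => Pi.single_zero ν) a 1)
  simp only [eulerLagrange_comp_jetEquiv hF hη hφ, hsingle, Pi.zero_apply, Pi.single_zero]
  rfl

theorem eulerLagrange_comp_jetEquiv_inr_single {F : CovJet m N → ℝ}
    (hF : ContDiffAt ℝ 2 F (covSect η φ x)) (hη : ContDiffAt ℝ 2 η x) (hφ : ContDiffAt ℝ 2 φ x)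
    (A : Fin N) :
    eulerLagrange (F ∘ jetEquiv m N) (fun z => (η z, φ z)) x (0, Pi.single A 1)
      = fderiv ℝ F (covSect η φ x) (0, 0, 0, Pi.single A 1, 0)
        - ∑ μ, fderiv ℝ (fun z => fderiv ℝ F (covSect η φ z)
            (0, 0, 0, 0, Pi.single A (Pi.single μ 1))) x (Pi.single μ 1) := by
  have hsingle : ∀ ν : Fin m, (fun i => Pi.single ν ((Pi.single A 1 : Fin N → ℝ) i))
      = (Pi.single A (Pi.single ν 1) : Fin N → Fin m → ℝ) := fun ν =>
    funext (Pi.apply_single (fun _ => Pi.single ν) (fun _ => Pi.single_zero ν) A 1)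
  simp only [eulerLagrange_comp_jetEquiv hF hη hφ, hsingle, Pi.zero_apply, Pi.single_zero]
  rfl

theorem eulerLagrange_Ltilde_comp_fderiv_eq_zero (hL : ContDiff ℝ 2 L) (hη : ContDiffAt ℝ 2 η x)
    (hφ : ContDiffAt ℝ 2 φ x) (hdet : (Matrix.of (jacobian η x)).det ≠ 0) :
    eulerLagrange (Ltilde L ∘ jetEquiv m N) (fun z => (η z, φ z)) x
      ∘L (fderiv ℝ η x).prod (fderiv ℝ φ x) = 0 := by
  have hsect : jetEquiv m N (firstJet (fun z => (η z, φ z)) x) = covSect η φ x :=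
    jetEquiv_firstJet (hη.differentiableAt (by simp)) (hφ.differentiableAt (by simp))
  have hF : ContDiffAt ℝ 2 (Ltilde L) (jetEquiv m N (firstJet (fun z => (η z, φ z)) x)) :=
    hsect ▸ contDiffAt_Ltilde hL hdet
  rw [← (hη.differentiableAt (by simp)).fderiv_prodMk (hφ.differentiableAt (by simp))]
  refine eulerLagrange_comp_fderiv_eq_zero (hF.comp _ (jetEquiv m N).contDiff.contDiffAt)
    (hη.prodMk hφ) (fun e => ?_) fun μ ν => ?_
  · rw [ContinuousLinearEquiv.comp_right_fderiv]
    exact fderiv_Ltilde_base (hF.differentiableAt (by simp)) e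
  · filter_upwards [(jetEquiv m N).continuous.continuousAt.eventually (hF.eventually (by simp))]
      with p hp
    exact canonicalStress_Ltilde_comp_jetEquiv (hp.differentiableAt (by simp)) μ ν

end CovariantizedLagrangian

theorem stmt_2_general {m N : ℕ}
    {L : (Fin m → ℝ) × (Fin N → ℝ) × (Fin N → Fin m → ℝ) → ℝ} (hL : ContDiff ℝ 2 L)
    {η : (Fin m → ℝ) → (Fin m → ℝ)} {φ : (Fin m → ℝ) → (Fin N → ℝ)} {x : Fin m → ℝ}
    (hη : ContDiffAt ℝ 2 η x) (hφ : ContDiffAt ℝ 2 φ x)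
    (hdet : (Matrix.of (jacobian η x)).det ≠ 0)
    (hEL : ∀ A : Fin N,
        fderiv ℝ (Ltilde L) (covSect η φ x) (0, 0, 0, Pi.single A 1, 0)
          - ∑ μ : Fin m, fderiv ℝ
              (fun x' => fderiv ℝ (Ltilde L) (covSect η φ x')
                (0, 0, 0, 0, Pi.single A (Pi.single μ 1))) x (Pi.single μ 1) = 0)
    (a : Fin m) :
    fderiv ℝ (Ltilde L) (covSect η φ x) (0, Pi.single a 1, 0, 0, 0)
      - ∑ μ : Fin m, fderiv ℝ
          (fun x' => fderiv ℝ (Ltilde L) (covSect η φ x')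
            (0, 0, Pi.single a (Pi.single μ 1), 0, 0)) x (Pi.single μ 1) = 0 := by
  have hF : ContDiffAt ℝ 2 (Ltilde L) (covSect η φ x) := contDiffAt_Ltilde hL hdet
  have hnoether := eulerLagrange_Ltilde_comp_fderiv_eq_zero hL hη hφ hdet
  rw [← eulerLagrange_comp_jetEquiv_inl_single hF hη hφ]
  simp only [← eulerLagrange_comp_jetEquiv_inr_single hF hη hφ] at hEL
  set EL := eulerLagrange (Ltilde L ∘ jetEquiv m N) (fun z => (η z, φ z)) x
  have hELφ : EL ∘L .inr ℝ _ _ = 0 :=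
    ContinuousLinearMap.coe_injective (LinearMap.pi_ext' fun A => LinearMap.ext_ring (hEL A))
  obtain ⟨h, hh⟩ := surjective_fderiv_of_det_jacobian_ne_zero hdet (Pi.single a 1)
  calc EL (Pi.single a 1, 0)
      = EL (fderiv ℝ η x h, fderiv ℝ φ x h) - EL (0, fderiv ℝ φ x h) := by
        simp [← map_sub, hh]
    _ = 0 - 0 := congrArg₂ _ (DFunLike.congr_fun hnoether h) (DFunLike.congr_fun hELφ _)
    _ = 0 := sub_zero 0

/-- if `(η,φ)` satisfies the Euler–Lagrange equations of `L̃` with respect to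
`φ`, then the Euler–Lagrange equations of `L̃` with respect to the covariance field `η`
are identically satisfied. -/
theorem stmt_2 {m N : ℕ}
    (L : (Fin m → ℝ) × (Fin N → ℝ) × (Fin N → Fin m → ℝ) → ℝ)
    (hL : ContDiff ℝ (⊤ : ℕ∞) L)
    (η η' : (Fin m → ℝ) → (Fin m → ℝ))
    (hη : ContDiff ℝ (⊤ : ℕ∞) η) (hη' : ContDiff ℝ (⊤ : ℕ∞) η')
    (hη1 : Function.LeftInverse η' η) (hη2 : Function.RightInverse η' η)
    (φ : (Fin m → ℝ) → (Fin N → ℝ)) (hφ : ContDiff ℝ (⊤ : ℕ∞) φ)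
    (hEL : ∀ (A : Fin N) (x : Fin m → ℝ),
        fderiv ℝ (Ltilde L) (covSect η φ x) (0, 0, 0, Pi.single A 1, 0)
          - ∑ μ : Fin m, fderiv ℝ
              (fun x' => fderiv ℝ (Ltilde L) (covSect η φ x')
                (0, 0, 0, 0, Pi.single A (Pi.single μ 1))) x (Pi.single μ 1) = 0) :
    ∀ (a : Fin m) (x : Fin m → ℝ),
        fderiv ℝ (Ltilde L) (covSect η φ x) (0, Pi.single a 1, 0, 0, 0)
          - ∑ μ : Fin m, fderiv ℝ
              (fun x' => fderiv ℝ (Ltilde L) (covSect η φ x')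
                (0, 0, Pi.single a (Pi.single μ 1), 0, 0)) x (Pi.single μ 1) = 0 := by
  have two_le : (2 : WithTop ℕ∞) ≤ (⊤ : ℕ∞) := WithTop.coe_le_coe.2 le_top
  exact fun a x => stmt_2_general (hL.of_le two_le) (hη.of_le two_le).contDiffAt
    (hφ.of_le two_le).contDiffAt (det_jacobian_ne_zero_of_leftInverse
      (hη.differentiable (by simp) x) (hη'.differentiable (by simp) _) hη1) (fun A => hEL A x) a
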